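/- For the field ℝ of real numbers, ℝ̃ equals the field of real algebraic numbers: a real number r admits a finite adequate set if and only if r is algebraic over ℚ. -/

import Mathlib

/-- A finite set `A ⊆ K` with `r ∈ A` is *adequate* for `r` if every map `f : A → K`
(here represented by its values, as a map `f : K → K` restricted in the hypotheses to `A`)
satisfying (1) `f 1 = 1` whenever `1 ∈ A`, (2) `f (a+b) = f a + f b` whenever `a, b, a+b ∈ A`,
(3) `f (a*b) = f a * f b` whenever `a, b, a*b ∈ A`, also satisfies `f r = r`. -/
def IsAdequate {K : Type*} [Field K] (r : K) (A : Finset K) : Prop :=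
  r ∈ A ∧
  ∀ f : K → K,
    ((1 : K) ∈ A → f 1 = 1) →
    (∀ a ∈ A, ∀ b ∈ A, a + b ∈ A → f (a + b) = f a + f b) →
    (∀ a ∈ A, ∀ b ∈ A, a * b ∈ A → f (a * b) = f a * f b) →
    f r = r

/-- `K̃` is the set of `r ∈ K` admitting a finite adequate set. -/
def KTilde (K : Type*) [Field K] : Set K :=
  {r : K | ∃ A : Finset K, IsAdequate r A}

/-!
Say that a finite set `A` forces a property of maps `f` if every `f` respecting the sums and
products inside `A` has it. Properties forced by some `A` are closed under finite conjunction and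
consequence, so they are the eventual properties of a filter `homFilter`, and `r ∈ K̃` means that
`f r = r` eventually.

*Algebraic implies adequate.* Eventually `f` preserves any given sum or product, hence fixes each
given rational number and satisfies `f (P r) = P (f r)` for a given `P ∈ ℚ[X]`. If `P r = 0`, then
`f r` is a real root of `P`. For rationals `p < r < q` with no other root of `P` in `[p, q]`, the
equations `r = p + s²` and `q = r + t²` are also preserved, and give `p ≤ f r ≤ q`; so `f r = r`.

*Adequate implies algebraic.* Suppose `r` is transcendental. A transcendence basis of `ℝ` through
`r` gives a subfield `F` with `r` transcendental over `F` and `ℝ` algebraic over `F(r)`. By the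
primitive element theorem any finite `A` lies in some `F(r)(θ)`. The minimal polynomial of `θ` has
a sign change near its simple root `θ`, and this survives replacing `r` in its coefficients by
`s = r + 1 / (n + 1)` for large `n`, so the new polynomial still has a real root `θ'`. As `s` is
transcendental over `F`, `r ↦ s`, `θ ↦ θ'` defines a field homomorphism `F(r)(θ) → ℝ`, which
respects all relations in `A` and moves `r` (`exists_ringHom_ne`); so `A` is not adequate for `r`.
-/

/-! ### Properties forced by a finite set -/

/-- `f` is a homomorphism as far as sums and products staying inside `A` can tell: these are the
three conditions imposed on the maps `f` in `IsAdequate`. -/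
def PartialHom {K : Type*} [Field K] (A : Finset K) (f : K → K) : Prop :=
  ((1 : K) ∈ A → f 1 = 1) ∧
  (∀ a ∈ A, ∀ b ∈ A, a + b ∈ A → f (a + b) = f a + f b) ∧
  (∀ a ∈ A, ∀ b ∈ A, a * b ∈ A → f (a * b) = f a * f b)

theorem PartialHom.mono {K : Type*} [Field K] {A B : Finset K} {f : K → K} (h : PartialHom B f)
    (hAB : A ⊆ B) : PartialHom A f :=
  ⟨fun h1 => h.1 (hAB h1), fun a ha b hb hab => h.2.1 a (hAB ha) b (hAB hb) (hAB hab),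
    fun a ha b hb hab => h.2.2 a (hAB ha) b (hAB hb) (hAB hab)⟩

/-- The filter on maps `K → K` generated by the sets of partial homomorphisms on `A`, for finite
`A`. A property holds eventually along it iff some finite `A` forces it. -/
def homFilter (K : Type*) [Field K] : Filter (K → K) :=
  ⨅ A : Finset K, Filter.principal {f | PartialHom A f}

theorem eventually_homFilter {K : Type*} [Field K] {Q : (K → K) → Prop} :
    (∀ᶠ f in homFilter K, Q f) ↔ ∃ A : Finset K, ∀ f, PartialHom A f → Q f := by
  classical
  have hdir : Directed (· ≥ ·) fun A : Finset K => Filter.principal {f | PartialHom A f} :=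
    fun A B => ⟨A ∪ B,
      Filter.principal_mono.2 fun f hf => PartialHom.mono hf Finset.subset_union_left,
      Filter.principal_mono.2 fun f hf => PartialHom.mono hf Finset.subset_union_right⟩
  rw [Filter.Eventually, homFilter, Filter.mem_iInf_of_directed hdir]
  rfl

theorem mem_KTilde_iff {K : Type*} [Field K] {r : K} :
    r ∈ KTilde K ↔ ∀ᶠ f in homFilter K, f r = r := by
  classical
  rw [eventually_homFilter]
  constructor
  · rintro ⟨A, -, h⟩
    exact ⟨A, fun f hf => h f hf.1 hf.2.1 hf.2.2⟩
  · rintro ⟨A, h⟩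
    exact ⟨insert r A, Finset.mem_insert_self _ _, fun f h1 h2 h3 =>
      h f (PartialHom.mono ⟨h1, h2, h3⟩ (Finset.subset_insert _ _))⟩

theorem eventually_map_one {K : Type*} [Field K] : ∀ᶠ f in homFilter K, f 1 = 1 :=
  eventually_homFilter.2 ⟨{1}, fun _ hf => hf.1 (by simp)⟩

theorem eventually_map_add {K : Type*} [Field K] (x y : K) :
    ∀ᶠ f in homFilter K, f (x + y) = f x + f y := by
  classical
  exact eventually_homFilter.2
    ⟨{x, y, x + y}, fun _ hf => hf.2.1 x (by simp) y (by simp) (by simp)⟩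

theorem eventually_map_mul {K : Type*} [Field K] (x y : K) :
    ∀ᶠ f in homFilter K, f (x * y) = f x * f y := by
  classical
  exact eventually_homFilter.2
    ⟨{x, y, x * y}, fun _ hf => hf.2.2 x (by simp) y (by simp) (by simp)⟩

theorem eventually_map_zero {K : Type*} [Field K] : ∀ᶠ f in homFilter K, f 0 = 0 := by
  filter_upwards [eventually_map_add (0 : K) 0] with f hf
  simpa using hf

/-- `K̃` is a subfield of `K`. -/
def KTildeSubfield (K : Type*) [Field K] : Subfield K where
  carrier := KTilde K
  one_mem' := mem_KTilde_iff.2 eventually_map_one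
  zero_mem' := mem_KTilde_iff.2 eventually_map_zero
  add_mem' {x y} hx hy := by
    rw [mem_KTilde_iff] at *
    filter_upwards [hx, hy, eventually_map_add x y] with f h1 h2 h3
    rw [h3, h1, h2]
  mul_mem' {x y} hx hy := by
    rw [mem_KTilde_iff] at *
    filter_upwards [hx, hy, eventually_map_mul x y] with f h1 h2 h3
    rw [h3, h1, h2]
  neg_mem' {x} hx := by
    rw [mem_KTilde_iff] at *
    filter_upwards [hx, eventually_map_zero, eventually_map_add x (-x)] with f h1 h2 h3
    rw [add_neg_cancel, h1, h2] at h3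
    exact (neg_eq_of_add_eq_zero_right h3.symm).symm
  inv_mem' x hx := by
    rcases eq_or_ne x 0 with rfl | h0
    · simpa using hx
    rw [mem_KTilde_iff] at *
    filter_upwards [hx, eventually_map_one, eventually_map_mul x x⁻¹] with f h1 h2 h3
    rw [mul_inv_cancel₀ h0, h1, h2] at h3
    exact eq_inv_of_mul_eq_one_right h3.symm

theorem eventually_map_ratCast (q : ℚ) : ∀ᶠ f in homFilter ℝ, f (q : ℝ) = (q : ℝ) :=
  mem_KTilde_iff.1 (SubfieldClass.ratCast_mem (KTildeSubfield ℝ) q)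

open Polynomial in
theorem eventually_map_aeval (x : ℝ) (P : ℚ[X]) :
    ∀ᶠ f in homFilter ℝ, f (aeval x P) = aeval (f x) P := by
  induction P using Polynomial.induction_on with
  | C a => simpa using eventually_map_ratCast a
  | add p q hp hq =>
    filter_upwards [hp, hq, eventually_map_add (aeval x p) (aeval x q)] with f h1 h2 h3
    rw [map_add, h3, h1, h2, map_add]
  | monomial n a h =>
    filter_upwards [h, eventually_map_mul (aeval x (C a * X ^ n)) x] with f h1 h2
    rw [pow_succ, ← mul_assoc, map_mul, aeval_X, h2, h1, map_mul _ _ X, aeval_X]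

/-! ### Algebraic numbers admit an adequate set -/

/-- A point can be separated from the other points of a finite set by a rational interval. -/
theorem exists_rat_isolating (r : ℝ) (S : Set ℝ) (hS : S.Finite) :
    ∃ p q : ℚ, (p : ℝ) < r ∧ r < q ∧ ∀ y ∈ S, (p : ℝ) ≤ y → y ≤ q → y = r := by
  have hopen : (S \ {r})ᶜ ∈ nhds r :=
    (hS.subset Set.sdiff_subset).isClosed.isOpen_compl.mem_nhds (by simp)
  obtain ⟨a, b, hab, hsub⟩ := mem_nhds_iff_exists_Ioo_subset.1 hopen
  obtain ⟨p, hp1, hp2⟩ := exists_rat_btwn hab.1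
  obtain ⟨q, hq1, hq2⟩ := exists_rat_btwn hab.2
  refine ⟨p, q, hp2, hq1, fun y hy h1 h2 => ?_⟩
  by_contra hne
  exact hsub ⟨by linarith, by linarith⟩ ⟨hy, hne⟩

open Polynomial in
theorem mem_KTilde_of_isAlgebraic {r : ℝ} (hr : IsAlgebraic ℚ r) : r ∈ KTilde ℝ := by
  obtain ⟨P, hP0, hPr⟩ := hr
  obtain ⟨p, q, hp, hq, hiso⟩ := exists_rat_isolating r (P.rootSet ℝ) (P.rootSet_finite ℝ)
  -- The inequalities `p ≤ r ≤ q` become equations by writing `r - p` and `q - r` as squares.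
  obtain ⟨s, hs⟩ : ∃ s : ℝ, (p : ℝ) + s * s = r :=
    ⟨√(r - p), by rw [Real.mul_self_sqrt (by linarith)]; ring⟩
  obtain ⟨t, ht⟩ : ∃ t : ℝ, r + t * t = q :=
    ⟨√(q - r), by rw [Real.mul_self_sqrt (by linarith)]; ring⟩
  rw [mem_KTilde_iff]
  filter_upwards [eventually_map_aeval r P, eventually_map_zero, eventually_map_ratCast p,
    eventually_map_ratCast q, eventually_map_add (p : ℝ) (s * s), eventually_map_mul s s,
    eventually_map_add r (t * t), eventually_map_mul t t] with f hfP hf0 hfp hfq h1 h2 h3 h4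
  rw [hs, hfp, h2] at h1
  rw [ht, hfq, h4] at h3
  rw [hPr, hf0] at hfP
  refine hiso _ ((mem_rootSet_of_ne hP0).2 hfP.symm) ?_ ?_
  · linarith [mul_self_nonneg (f s)]
  · linarith [mul_self_nonneg (f t)]

section

open Polynomial IntermediateField

/-! ### Extending field homomorphisms to the real numbers -/

/-- If `r` is transcendental over `ℚ`, a transcendence basis of `ℝ` through `r` yields a subfield
`F` over which `r` is a coordinate: transcendental, and generating `ℝ` up to algebraic
extension. -/
theorem exists_intermediateField_transcendental {r : ℝ} (hr : Transcendental ℚ r) :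
    ∃ F : IntermediateField ℚ ℝ, Transcendental F r ∧ Algebra.IsAlgebraic F⟮r⟯ ℝ := by
  have hind : AlgebraicIndepOn ℚ id {r} := (algebraicIndependent_unique_type_iff).2 hr
  obtain ⟨B, hrB, hB⟩ := exists_isTranscendenceBasis_superset hind
  rw [Set.singleton_subset_iff] at hrB
  refine ⟨adjoin ℚ (B \ {r}), ?_, ?_⟩
  · have h := hB.1.transcendental_adjoin (s := {⟨r, hrB⟩}ᶜ) (i := ⟨r, hrB⟩) (by simp)
    have hS : ((↑) : B → ℝ) '' {⟨r, hrB⟩}ᶜ = B \ {r} := by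
      ext x
      simp only [Set.mem_image, Set.mem_compl_iff, Set.mem_singleton_iff, Subtype.exists,
        Subtype.mk.injEq, Set.mem_sdiff]
      grind
    rw [hS] at h
    open scoped IntermediateField.algebraAdjoinAdjoin in
    exact fun h' => h ((IsFractionRing.isAlgebraic_iff (Algebra.adjoin ℚ (B \ {r}))
      (adjoin ℚ (B \ {r})) ℝ).2 h')
  · have h := hB.isAlgebraic_field
    rw [Subtype.range_coe] at h
    have hle : adjoin ℚ B ≤ ((adjoin ℚ (B \ {r}))⟮r⟯).restrictScalars ℚ := by
      rw [adjoin_le_iff]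
      intro x hx
      rw [coe_restrictScalars, SetLike.mem_coe]
      by_cases hxr : x = r
      · rw [hxr]
        exact mem_adjoin_simple_self _ r
      · have hxF : x ∈ adjoin ℚ (B \ {r}) := subset_adjoin _ _ ⟨hx, hxr⟩
        exact IntermediateField.algebraMap_mem _ (⟨x, hxF⟩ : adjoin ℚ (B \ {r}))
    refine ⟨fun x => ?_⟩
    exact (h.isAlgebraic x).ringHom_of_comp_eq (inclusion hle).toRingHom (RingHom.id ℝ)
      (inclusion hle).injective rfl

/-- A field homomorphism out of `K` extends to `K⟮θ⟯` as soon as the transported minimal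
polynomial of `θ` has a root. -/
theorem exists_ringHom_adjoin {K L : Type*} [Field K] [Field L] [Algebra K L] {θ : L}
    (hθ : IsIntegral K θ) (ψ : K →+* L) (θ' : L) (h : (minpoly K θ).eval₂ ψ θ' = 0) :
    ∃ g : K⟮θ⟯ →+* L, ∀ k, g (algebraMap K K⟮θ⟯ k) = ψ k := by
  refine ⟨(AdjoinRoot.lift ψ θ' h).comp
    (adjoinRootEquivAdjoin K hθ).symm.toRingEquiv.toRingHom, fun k => ?_⟩
  have : (adjoinRootEquivAdjoin K hθ).symm (algebraMap K K⟮θ⟯ k) =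
      AdjoinRoot.of (minpoly K θ) k := by
    rw [AlgEquiv.commutes]; rfl
  change AdjoinRoot.lift ψ θ' h ((adjoinRootEquivAdjoin K hθ).symm _) = _
  rw [this, AdjoinRoot.lift_of]

/-- The primitive element theorem inside an algebraic extension: finitely many elements lie in a
common simple subextension. -/
theorem exists_simple_adjoin {K L : Type*} [Field K] [CharZero K] [Field L] [Algebra K L]
    [Algebra.IsAlgebraic K L] (A : Finset L) : ∃ θ : L, ∀ a ∈ A, a ∈ K⟮θ⟯ := by
  have : FiniteDimensional K (adjoin K (A : Set L)) :=
    finiteDimensional_adjoin fun x _ => (Algebra.IsAlgebraic.isAlgebraic x).isIntegral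
  obtain ⟨α, hα⟩ := Field.exists_primitive_element K (adjoin K (A : Set L))
  refine ⟨α, fun a ha => ?_⟩
  have h1 : K⟮(α : L)⟯ = adjoin K (A : Set L) := by
    have := congrArg (IntermediateField.map (adjoin K (A : Set L)).val) hα
    rw [adjoin_map] at this
    simpa [← AlgHom.fieldRange_eq_map] using this
  rw [h1]
  exact subset_adjoin _ _ ha

/-! ### Perturbing a transcendental number -/

/-- Near a simple root `p = (X - θ) q` with `q θ ≠ 0`, so `p` takes opposite signs at
`θ + ε` and `θ - ε` for small `ε > 0`. -/
theorem exists_sign_change {p : ℝ[X]} {θ : ℝ} (h0 : p.eval θ = 0)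
    (h1 : p.derivative.eval θ ≠ 0) : ∃ a b, p.eval a * p.eval b < 0 := by
  obtain ⟨q, rfl⟩ := dvd_iff_isRoot.2 h0
  have hq : q.eval θ ≠ 0 := by simpa using h1
  have hcont : Filter.Tendsto (fun ε : ℝ => q.eval (θ + ε) * q.eval (θ - ε))
      (nhdsWithin 0 (Set.Ioi 0)) (nhds (q.eval θ * q.eval θ)) := by
    have : Continuous fun ε : ℝ => q.eval (θ + ε) * q.eval (θ - ε) := by fun_prop
    have := this.tendsto 0
    simp only [add_zero, sub_zero] at this
    exact this.mono_left nhdsWithin_le_nhds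
  obtain ⟨ε, hε, hpos⟩ := ((hcont.eventually_const_lt (mul_self_pos.2 hq)).and
    self_mem_nhdsWithin).exists
  refine ⟨θ + ε, θ - ε, ?_⟩
  simp only [eval_mul, eval_sub, eval_X, eval_C]
  have : 0 < ε * ε := mul_self_pos.2 (ne_of_gt hpos)
  nlinarith [mul_pos this hε]

/-- Evaluation at a transcendental `s`, as a homomorphism `F(X) → ℝ`. -/
noncomputable def evalHom {F : Type*} [Field F] [Algebra F ℝ] (s : ℝ) (hs : Transcendental F s) :
    RatFunc F →+* ℝ :=
  (algebraMap F⟮s⟯ ℝ).comp (RatFunc.algEquivOfTranscendental s hs).toRingEquiv.toRingHom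

theorem evalHom_apply {F : Type*} [Field F] [Algebra F ℝ] (s : ℝ) (hs : Transcendental F s)
    (u : RatFunc F) : evalHom s hs u = aeval s u.num / aeval s u.denom :=
  RatFunc.algEquivOfTranscendental_apply s hs u

theorem evalHom_X {F : Type*} [Field F] [Algebra F ℝ] (s : ℝ) (hs : Transcendental F s) :
    evalHom s hs RatFunc.X = s :=
  RatFunc.algEquivOfTranscendental_X s hs

/-- A simple real root of a polynomial over `F(X)`, specialised at `X = r`, persists when `r` is
moved slightly to a suitable `s ≠ r`: a sign change is stable. Rational translates of `r` provide
such `s` that are still transcendental. -/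
theorem exists_perturbed_root {F : Type*} [Field F] [CharZero F] [Algebra F ℝ] {r : ℝ}
    (hr : Transcendental F r) (P : (RatFunc F)[X]) {θ : ℝ} (h0 : P.eval₂ (evalHom r hr) θ = 0)
    (h1 : P.derivative.eval₂ (evalHom r hr) θ ≠ 0) :
    ∃ (s : ℝ) (hs : Transcendental F s) (θ' : ℝ), s ≠ r ∧ P.eval₂ (evalHom s hs) θ' = 0 := by
  obtain ⟨a, b, hab⟩ := exists_sign_change (p := P.map (evalHom r hr)) (θ := θ)
    (by rwa [eval_map]) (by rwa [derivative_map, eval_map])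
  -- The value at `y` of `P` specialised at `X = s`, written so as to make sense for every real `s`.
  let G : ℝ → ℝ → ℝ := fun y s =>
    P.sum fun i u => aeval s u.num / aeval s u.denom * y ^ i
  have hG : ∀ s (hs : Transcendental F s) y, (P.map (evalHom s hs)).eval y = G y s := by
    intro s hs y
    simp only [eval_map, eval₂_eq_sum, evalHom_apply, G]
  have hcont : ∀ y, ContinuousAt (G y) r := by
    intro y
    refine tendsto_finsetSum _ fun i _ => ?_
    refine ContinuousAt.mul (ContinuousAt.div ?_ ?_ ?_) continuousAt_const
    · exact (Polynomial.continuous_aeval _).continuousAt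
    · exact (Polynomial.continuous_aeval _).continuousAt
    · exact fun h => hr ⟨_, RatFunc.denom_ne_zero _, h⟩
  rw [hG, hG] at hab
  have hev : ∀ᶠ s in nhds r, G a s * G b s < 0 :=
    ((hcont a).mul (hcont b)).eventually_lt_const hab
  have htend : Filter.Tendsto (fun n : ℕ => r + 1 / ((n : ℝ) + 1)) Filter.atTop (nhds r) := by
    simpa using tendsto_one_div_add_atTop_nhds_zero_nat.const_add r
  obtain ⟨n, hn⟩ := (htend.eventually hev).exists
  have hs : Transcendental F (r + 1 / ((n : ℝ) + 1)) := by
    intro h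
    refine hr ?_
    have := h.sub (isAlgebraic_algebraMap (A := ℝ) (1 / ((n : F) + 1)))
    simpa using this
  refine ⟨_, hs, ?_⟩
  rw [← hG _ hs, ← hG _ hs] at hn
  have hne : r + 1 / ((n : ℝ) + 1) ≠ r := by
    have : 0 < 1 / ((n : ℝ) + 1) := by positivity
    linarith
  have hpc := (P.map (evalHom _ hs)).continuous
  obtain ⟨θ', hθ'⟩ : (0 : ℝ) ∈ Set.range fun y => (P.map (evalHom _ hs)).eval y := by
    rcases mul_neg_iff.1 hn with h | h
    · exact mem_range_of_exists_le_of_exists_ge hpc ⟨b, h.2.le⟩ ⟨a, h.1.le⟩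
    · exact mem_range_of_exists_le_of_exists_ge hpc ⟨a, h.1.le⟩ ⟨b, h.2.le⟩
  exact ⟨θ', hne, by rwa [← eval_map]⟩

/-- A transcendental `r` is moved by some field homomorphism into `ℝ` defined on a subfield
containing any prescribed finite set. -/
theorem exists_ringHom_ne {r : ℝ} (hr : Transcendental ℚ r) (A : Finset ℝ) :
    ∃ (M : Subfield ℝ) (g : M →+* ℝ), (∀ a ∈ A, a ∈ M) ∧ ∃ h : r ∈ M, g ⟨r, h⟩ ≠ r := by
  obtain ⟨F, hF, halg⟩ := exists_intermediateField_transcendental hr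
  let _ : Algebra (RatFunc F) ℝ := (evalHom r hF).toAlgebra
  have : Algebra.IsAlgebraic (RatFunc F) ℝ := by
    refine ⟨fun x => ?_⟩
    refine (halg.isAlgebraic x).ringHom_of_comp_eq
      (RatFunc.algEquivOfTranscendental r hF).symm (RingHom.id ℝ)
      (AlgEquiv.injective _) ?_
    ext y
    change algebraMap F⟮r⟯ ℝ (RatFunc.algEquivOfTranscendental r hF
      ((RatFunc.algEquivOfTranscendental r hF).symm y)) = _
    rw [AlgEquiv.apply_symm_apply]
    rfl
  obtain ⟨θ, hθ⟩ := exists_simple_adjoin (K := RatFunc F) A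
  have hint : IsIntegral (RatFunc F) θ := (Algebra.IsAlgebraic.isAlgebraic θ).isIntegral
  obtain ⟨s, hs, θ', hsr, hroot⟩ := exists_perturbed_root hF (minpoly (RatFunc F) θ) (θ := θ)
    (minpoly.aeval _ _)
    ((minpoly.irreducible hint).separable.aeval_derivative_ne_zero (minpoly.aeval _ _))
  obtain ⟨g, hg⟩ := exists_ringHom_adjoin hint (evalHom s hs) θ' hroot
  have hX : algebraMap (RatFunc F) ℝ RatFunc.X = r := evalHom_X r hF
  refine ⟨(RatFunc F)⟮θ⟯.toSubfield, g, hθ, hX ▸ IntermediateField.algebraMap_mem _ _, ?_⟩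
  have h2 := hg RatFunc.X
  rw [evalHom_X] at h2
  have h3 : (⟨r, hX ▸ IntermediateField.algebraMap_mem _ _⟩ : (RatFunc F)⟮θ⟯) =
      algebraMap (RatFunc F) (RatFunc F)⟮θ⟯ RatFunc.X := Subtype.ext hX.symm
  exact fun h => hsr (h2.symm.trans ((congrArg g h3).symm.trans h))

theorem isAlgebraic_of_mem_KTilde {r : ℝ} (hr : r ∈ KTilde ℝ) : IsAlgebraic ℚ r := by
  classical
  by_contra htr
  obtain ⟨A, -, hA⟩ := hr
  obtain ⟨M, g, hAM, hrM, hne⟩ := exists_ringHom_ne htr A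
  -- Values outside `M ⊇ A` do not matter; they are set to `0`.
  have key := hA (fun x => if h : x ∈ M then g ⟨x, h⟩ else 0) ?_ ?_ ?_
  · rw [dif_pos hrM] at key
    exact hne key
  · intro _
    rw [dif_pos M.one_mem]
    exact map_one g
  · intro a ha b hb _
    rw [dif_pos (hAM a ha), dif_pos (hAM b hb), dif_pos (M.add_mem (hAM a ha) (hAM b hb))]
    exact map_add g ⟨a, hAM a ha⟩ ⟨b, hAM b hb⟩
  · intro a ha b hb _
    rw [dif_pos (hAM a ha), dif_pos (hAM b hb), dif_pos (M.mul_mem (hAM a ha) (hAM b hb))]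
    exact map_mul g ⟨a, hAM a ha⟩ ⟨b, hAM b hb⟩

end

/-- `ℝ̃` is the field of real algebraic numbers: a real number admits a finite adequate set
iff it is algebraic over `ℚ`. -/
theorem stmt_13 : KTilde ℝ = {r : ℝ | IsAlgebraic ℚ r} := by
  exact Set.ext fun _ => ⟨isAlgebraic_of_mem_KTilde, mem_KTilde_of_isAlgebraic⟩
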